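/- Let Ω be a compact subset of ℝ^d and let μ, ν be Borel probability measures on Ω. Then the 1-Wasserstein distance W_1(μ,ν) equals the supremum of ∫_Ω φ d(μ − ν) over all bounded continuous functions φ : Ω → ℝ satisfying the admissibility condition φ(x) − φ(y) ≤ |x − y| for all x ∈ supp(μ) and y ∈ supp(ν). -/

import Mathlib

open MeasureTheory
open scoped ENNReal

/-- The (topological) support of a measure: the set of points all of whose
neighborhoods have positive measure. -/
def msupport {α : Type*} [TopologicalSpace α] [MeasurableSpace α]
    (μ : Measure α) : Set α :=
  {x | ∀ U ∈ nhds x, 0 < μ U}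

/-- `γ` is a coupling of `μ` and `ν`: `γ(A × Ω) = μ(A)` and `γ(Ω × A) = ν(A)` for
all measurable `A`. -/
def IsCoupling {α : Type*} [MeasurableSpace α]
    (γ : Measure (α × α)) (μ ν : Measure α) : Prop :=
  ∀ A : Set α, MeasurableSet A →
    γ (A ×ˢ (Set.univ : Set α)) = μ A ∧ γ ((Set.univ : Set α) ×ˢ A) = ν A

/-- The 1-Wasserstein distance: the infimum of `∫ |x - y| dγ` over all couplings
`γ` of `μ` and `ν`. -/
noncomputable def W1 {α : Type*} [MeasurableSpace α] [PseudoMetricSpace α]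
    (μ ν : Measure α) : ℝ :=
  sInf {r | ∃ γ : Measure (α × α), IsProbabilityMeasure γ ∧ IsCoupling γ μ ν ∧
    r = ∫ p, dist p.1 p.2 ∂γ}

/-- Every sublinear functional dominates a linear functional agreeing with it at a given point. -/
theorem exists_linearMap_le_sublinear_apply_eq {E : Type*} [AddCommGroup E] [Module ℝ E]
    (N : E → ℝ) (N_hom : ∀ c : ℝ, 0 < c → ∀ x, N (c • x) = c * N x)
    (N_add : ∀ x y, N (x + y) ≤ N x + N y) (x₀ : E) :
    ∃ L : E →ₗ[ℝ] ℝ, (∀ x, L x ≤ N x) ∧ L x₀ = N x₀ := by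
  have N_zero : N 0 = 0 := by
    have := N_hom 2 (by norm_num) 0
    rw [smul_zero] at this
    linarith
  have H : ∀ c : ℝ, c • x₀ = 0 → (RingHom.id ℝ) c • N x₀ = 0 := by
    intro c hc
    rcases smul_eq_zero.1 hc with h | h
    · simp [h]
    · simp [h, N_zero]
  obtain ⟨L, hL, hLN⟩ := exists_extension_of_le_sublinear
    (LinearPMap.mkSpanSingleton' x₀ (N x₀) H) N N_hom N_add (by
      rintro ⟨x, hx⟩
      obtain ⟨c, rfl⟩ := Submodule.mem_span_singleton.1 hx
      rw [LinearPMap.mkSpanSingleton'_apply]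
      simp only [RingHom.id_apply, smul_eq_mul]
      rcases lt_trichotomy c 0 with hc | hc | hc
      · have h1 := N_add (c • x₀) ((-c) • x₀)
        rw [← add_smul, add_neg_cancel, zero_smul, N_zero, N_hom (-c) (by linarith)] at h1
        linarith
      · simp [hc, N_zero]
      · rw [N_hom c hc])
  refine ⟨L, hLN, ?_⟩
  have h := hL ⟨x₀, Submodule.mem_span_singleton_self x₀⟩
  exact h.trans (LinearPMap.mkSpanSingleton'_apply_self _ _ _ _)

/-- The Riesz–Markov–Kakutani theorem on a compact Hausdorff space. -/
theorem exists_measure_integral_eq_of_nonneg {X : Type*} [TopologicalSpace X] [CompactSpace X]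
    [T2Space X] [MeasurableSpace X] [BorelSpace X] (L : C(X, ℝ) →ₗ[ℝ] ℝ)
    (hL : ∀ h : C(X, ℝ), (∀ x, 0 ≤ h x) → 0 ≤ L h) :
    ∃ γ : Measure X, IsFiniteMeasure γ ∧ ∀ h : C(X, ℝ), ∫ x, h x ∂γ = L h := by
  let Λ : CompactlySupportedContinuousMap X ℝ →ₚ[ℝ] ℝ := PositiveLinearMap.mk₀
    { toFun := fun f => L f.toContinuousMap
      map_add' := fun f g => L.map_add f.toContinuousMap g.toContinuousMap
      map_smul' := fun c f => L.map_smul c f.toContinuousMap }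
    (fun f hf => hL _ hf)
  have : (RealRMK.rieszMeasure Λ).Regular := by
    unfold RealRMK.rieszMeasure; infer_instance
  refine ⟨RealRMK.rieszMeasure Λ, inferInstance, fun h => ?_⟩
  exact RealRMK.integral_rieszMeasure Λ (CompactlySupportedContinuousMap.continuousMapEquiv h)

theorem integrable_continuousMap {X : Type*} [TopologicalSpace X] [CompactSpace X]
    [MeasurableSpace X] [OpensMeasurableSpace X] (μ : Measure X)
    [IsFiniteMeasure μ] (f : C(X, ℝ)) : Integrable f μ :=
  (BoundedContinuousFunction.mkOfCompact f).integrable μ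

theorem IsCoupling.map_fst {α : Type*} [MeasurableSpace α] {γ : Measure (α × α)}
    {μ ν : Measure α} (h : IsCoupling γ μ ν) : γ.map Prod.fst = μ := by
  ext A hA
  rw [Measure.map_apply measurable_fst hA, ← (h A hA).1, Set.prod_univ]

theorem IsCoupling.map_snd {α : Type*} [MeasurableSpace α] {γ : Measure (α × α)}
    {μ ν : Measure α} (h : IsCoupling γ μ ν) : γ.map Prod.snd = ν := by
  ext A hA
  rw [Measure.map_apply measurable_snd hA, ← (h A hA).2, Set.univ_prod]

theorem isCoupling_of_map_eq {α : Type*} [MeasurableSpace α] {γ : Measure (α × α)}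
    {μ ν : Measure α} (h1 : γ.map Prod.fst = μ) (h2 : γ.map Prod.snd = ν) :
    IsCoupling γ μ ν := by
  intro A hA
  rw [← h1, ← h2, Measure.map_apply measurable_fst hA, Measure.map_apply measurable_snd hA,
    Set.prod_univ, Set.univ_prod]
  exact ⟨rfl, rfl⟩

/-- The values `∫ f dμ + ∫ g dν` of the pairs of continuous functions with `h ≤ f ⊕ g`. -/
def dualValues {α : Type*} [TopologicalSpace α] [MeasurableSpace α]
    (μ ν : Measure α) (h : C(α × α, ℝ)) : Set ℝ :=
  {r | ∃ f g : C(α, ℝ), (∀ x y, h (x, y) ≤ f x + g y) ∧ r = ∫ x, f x ∂μ + ∫ y, g y ∂ν}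

theorem dualValues_nonempty {α : Type*} [TopologicalSpace α] [CompactSpace α]
    [MeasurableSpace α] (μ ν : Measure α) (h : C(α × α, ℝ)) :
    (dualValues μ ν h).Nonempty := by
  refine ⟨_, ContinuousMap.const α ‖h‖, 0, fun x y => ?_, rfl⟩
  simpa using (le_abs_self _).trans (h.norm_coe_le_norm (x, y))

theorem bddBelow_range_dist_add {α : Type*} [PseudoMetricSpace α] [CompactSpace α]
    (g : C(α, ℝ)) (x : α) :
    BddBelow (Set.range fun y => dist x y + g y) :=
  (isCompact_range (by fun_prop)).bddBelow

/-- The infimal convolution of a continuous function with the distance is `1`-Lipschitz. -/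
theorem lipschitzWith_iInf_dist_add {α : Type*} [PseudoMetricSpace α] [CompactSpace α]
    (g : C(α, ℝ)) :
    LipschitzWith 1 fun x => ⨅ y, (dist x y + g y) := by
  refine LipschitzWith.of_le_add fun x x' => ?_
  have : Nonempty α := ⟨x⟩
  rw [← sub_le_iff_le_add]
  refine le_ciInf fun y => ?_
  have := ciInf_le (bddBelow_range_dist_add g x) y
  linarith [dist_triangle x x' y]

section Duality

variable {α : Type*} [MetricSpace α] [CompactSpace α] [SecondCountableTopology α]
  [MeasurableSpace α] [BorelSpace α]

variable (μ ν : Measure α) [IsProbabilityMeasure μ] [IsProbabilityMeasure ν]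

theorem integral_prod_le_of_mem_dualValues {h : C(α × α, ℝ)} {r : ℝ}
    (hr : r ∈ dualValues μ ν h) : ∫ p, h p ∂(μ.prod ν) ≤ r := by
  obtain ⟨f, g, hfg, rfl⟩ := hr
  have hf := integrable_continuousMap (μ.prod ν) (f.comp ContinuousMap.fst)
  have hg := integrable_continuousMap (μ.prod ν) (g.comp ContinuousMap.snd)
  calc ∫ p, h p ∂(μ.prod ν) ≤ ∫ p, (f p.1 + g p.2) ∂(μ.prod ν) :=
        integral_mono (integrable_continuousMap _ h) (hf.add hg) fun p => hfg p.1 p.2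
    _ = ∫ p, f p.1 ∂(μ.prod ν) + ∫ p, g p.2 ∂(μ.prod ν) := integral_add hf hg
    _ = _ := by rw [integral_fun_fst (μ := μ) (ν := ν) f, integral_fun_snd (μ := μ) (ν := ν) g]; simp

theorem dualValues_bddBelow (h : C(α × α, ℝ)) : BddBelow (dualValues μ ν h) :=
  ⟨_, fun _ hr => integral_prod_le_of_mem_dualValues μ ν hr⟩

theorem sInf_dualValues_add_le (h k : C(α × α, ℝ)) :
    sInf (dualValues μ ν (h + k)) ≤ sInf (dualValues μ ν h) + sInf (dualValues μ ν k) := by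
  rw [← csInf_add (dualValues_nonempty μ ν h) (dualValues_bddBelow μ ν h)
    (dualValues_nonempty μ ν k) (dualValues_bddBelow μ ν k)]
  refine csInf_le_csInf (dualValues_bddBelow μ ν _)
    ((dualValues_nonempty μ ν h).add (dualValues_nonempty μ ν k)) ?_
  rintro _ ⟨_, ⟨f, g, hfg, rfl⟩, _, ⟨f', g', hfg', rfl⟩, rfl⟩
  refine ⟨f + f', g + g', fun x y => ?_, ?_⟩
  · simp only [ContinuousMap.add_apply]
    linarith [hfg x y, hfg' x y]
  · simp only [ContinuousMap.add_apply]
    rw [integral_add (integrable_continuousMap μ f) (integrable_continuousMap μ f'),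
      integral_add (integrable_continuousMap ν g) (integrable_continuousMap ν g')]
    ring

theorem sInf_dualValues_smul {c : ℝ} (hc : 0 < c) (h : C(α × α, ℝ)) :
    sInf (dualValues μ ν (c • h)) = c * sInf (dualValues μ ν h) := by
  have key : ∀ {c : ℝ}, 0 < c → ∀ h : C(α × α, ℝ),
      sInf (dualValues μ ν (c • h)) ≤ c * sInf (dualValues μ ν h) := by
    intro c hc h
    rw [← div_le_iff₀' hc]
    refine le_csInf (dualValues_nonempty μ ν h) ?_
    rintro _ ⟨f, g, hfg, rfl⟩
    rw [div_le_iff₀' hc]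
    refine csInf_le (dualValues_bddBelow μ ν _) ⟨c • f, c • g, fun x y => ?_, ?_⟩
    · simp only [ContinuousMap.smul_apply, smul_eq_mul, ← mul_add]
      exact mul_le_mul_of_nonneg_left (hfg x y) hc.le
    · simp only [ContinuousMap.smul_apply, smul_eq_mul, integral_const_mul, mul_add]
  refine le_antisymm (key hc h) ?_
  have := key (inv_pos.2 hc) (c • h)
  rw [smul_smul, inv_mul_cancel₀ hc.ne', one_smul] at this
  rwa [← le_inv_mul_iff₀ hc]

/-- Strong Kantorovich duality, with attainment of the primal problem. -/
theorem exists_isCoupling_integral_eq_sInf_dualValues (h₀ : C(α × α, ℝ)) :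
    ∃ γ : Measure (α × α), IsProbabilityMeasure γ ∧ IsCoupling γ μ ν ∧
      ∫ p, h₀ p ∂γ = sInf (dualValues μ ν h₀) := by
  obtain ⟨L, hL, hL₀⟩ := exists_linearMap_le_sublinear_apply_eq
    (fun h => sInf (dualValues μ ν h)) (fun c hc h => sInf_dualValues_smul μ ν hc h)
    (sInf_dualValues_add_le μ ν) h₀
  have hle : ∀ (h : C(α × α, ℝ)) (f g : C(α, ℝ)), (∀ x y, h (x, y) ≤ f x + g y) →
      L h ≤ ∫ x, f x ∂μ + ∫ y, g y ∂ν := fun h f g hfg =>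
    (hL h).trans (csInf_le (dualValues_bddBelow μ ν h) ⟨f, g, hfg, rfl⟩)
  obtain ⟨γ, hγ, hγL⟩ := exists_measure_integral_eq_of_nonneg L (fun h hh => by
    have := hle (-h) 0 0 (fun x y => by simpa using hh (x, y))
    simpa using this)
  have hfst : ∀ f : C(α, ℝ), L (f.comp ContinuousMap.fst) = ∫ x, f x ∂μ := by
    intro f
    have h1 := hle (f.comp ContinuousMap.fst) f 0 (by simp)
    have h2 := hle (-(f.comp ContinuousMap.fst)) (-f) 0 (by simp)
    simp only [map_neg, ContinuousMap.neg_apply, integral_neg, ContinuousMap.zero_apply,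
      integral_zero, add_zero] at h1 h2
    linarith
  have hsnd : ∀ f : C(α, ℝ), L (f.comp ContinuousMap.snd) = ∫ x, f x ∂ν := by
    intro f
    have h1 := hle (f.comp ContinuousMap.snd) 0 f (by simp)
    have h2 := hle (-(f.comp ContinuousMap.snd)) 0 (-f) (by simp)
    simp only [map_neg, ContinuousMap.neg_apply, integral_neg, ContinuousMap.zero_apply,
      integral_zero, zero_add] at h1 h2
    linarith
  have m1 : γ.map Prod.fst = μ := by
    refine ext_of_forall_integral_eq_of_IsFiniteMeasure fun f => ?_
    rw [integral_map measurable_fst.aemeasurable f.continuous.aestronglyMeasurable]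
    exact (hγL _).trans (hfst f.toContinuousMap)
  have m2 : γ.map Prod.snd = ν := by
    refine ext_of_forall_integral_eq_of_IsFiniteMeasure fun f => ?_
    rw [integral_map measurable_snd.aemeasurable f.continuous.aestronglyMeasurable]
    exact (hγL _).trans (hsnd f.toContinuousMap)
  refine ⟨γ, ⟨?_⟩, isCoupling_of_map_eq m1 m2, (hγL h₀).trans hL₀⟩
  have : μ Set.univ = 1 := measure_univ
  rwa [← m1, Measure.map_apply measurable_fst MeasurableSet.univ, Set.preimage_univ] at this

/-- Some coupling has a cost approximated from below by `∫ φ d(μ - ν)` with `φ` `1`-Lipschitz. -/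
theorem exists_isCoupling_forall_exists_lipschitz :
    ∃ γ : Measure (α × α), IsProbabilityMeasure γ ∧ IsCoupling γ μ ν ∧
      ∀ ε > 0, ∃ φ : α → ℝ, LipschitzWith 1 φ ∧
        ∫ p, dist p.1 p.2 ∂γ ≤ ∫ x, φ x ∂μ - ∫ y, φ y ∂ν + ε := by
  obtain ⟨γ, hγ, hc, he⟩ := exists_isCoupling_integral_eq_sInf_dualValues μ ν
    (-⟨fun p : α × α => dist p.1 p.2, continuous_dist⟩)
  refine ⟨γ, hγ, hc, fun ε hε => ?_⟩
  obtain ⟨_, ⟨f, g, hfg, rfl⟩, hlt⟩ := Real.lt_sInf_add_pos (dualValues_nonempty μ ν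
    (-⟨fun p : α × α => dist p.1 p.2, continuous_dist⟩)) hε
  rw [← he] at hlt
  simp only [ContinuousMap.neg_apply, ContinuousMap.coe_mk, integral_neg] at hlt hfg
  have hφ := lipschitzWith_iInf_dist_add g
  refine ⟨_, hφ, ?_⟩
  have h1 : ∫ x, -f x ∂μ ≤ ∫ x, ⨅ y, (dist x y + g y) ∂μ := by
    refine integral_mono (integrable_continuousMap μ f).neg
      (integrable_continuousMap μ ⟨_, hφ.continuous⟩) fun x => ?_
    have : Nonempty α := ⟨x⟩
    exact le_ciInf fun y => by linarith [hfg x y]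
  have h2 : ∫ x, ⨅ y, (dist x y + g y) ∂ν ≤ ∫ x, g x ∂ν := by
    refine integral_mono (integrable_continuousMap ν ⟨_, hφ.continuous⟩)
      (integrable_continuousMap ν g) fun x => ?_
    simpa using ciInf_le (bddBelow_range_dist_add g x) x
  rw [integral_neg] at h1
  linarith

end Duality

theorem msupport_mem_ae {α : Type*} [TopologicalSpace α] [HereditarilyLindelofSpace α]
    [MeasurableSpace α] (μ : Measure α) :
    ∀ᵐ x ∂μ, x ∈ msupport μ := by
  have h : msupport μ = μ.support := by
    ext x
    exact (Measure.mem_support_iff_forall x).symm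
  rw [h]
  exact Measure.support_mem_ae

theorem IsCoupling.integral_sub_integral_le {α : Type*} [PseudoMetricSpace α] [CompactSpace α]
    [SecondCountableTopology α] [MeasurableSpace α] [BorelSpace α]
    {μ ν : Measure α} {γ : Measure (α × α)}
    [IsFiniteMeasure γ] (hγ : IsCoupling γ μ ν) {φ : α → ℝ} (hφ : Continuous φ)
    (hadm : ∀ x ∈ msupport μ, ∀ y ∈ msupport ν, φ x - φ y ≤ dist x y) :
    ∫ x, φ x ∂μ - ∫ y, φ y ∂ν ≤ ∫ p, dist p.1 p.2 ∂γ := by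
  have e1 : ∫ x, φ x ∂μ = ∫ p, φ p.1 ∂γ := by
    rw [← hγ.map_fst, integral_map measurable_fst.aemeasurable hφ.aestronglyMeasurable]
  have e2 : ∫ x, φ x ∂ν = ∫ p, φ p.2 ∂γ := by
    rw [← hγ.map_snd, integral_map measurable_snd.aemeasurable hφ.aestronglyMeasurable]
  have i1 : Integrable (fun p : α × α => φ p.1) γ :=
    integrable_continuousMap γ ⟨_, hφ.comp continuous_fst⟩
  have i2 : Integrable (fun p : α × α => φ p.2) γ :=
    integrable_continuousMap γ ⟨_, hφ.comp continuous_snd⟩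
  rw [e1, e2, ← integral_sub i1 i2]
  have a1 : ∀ᵐ p ∂γ, p.1 ∈ msupport μ :=
    ae_of_ae_map measurable_fst.aemeasurable (hγ.map_fst.symm ▸ msupport_mem_ae μ)
  have a2 : ∀ᵐ p ∂γ, p.2 ∈ msupport ν :=
    ae_of_ae_map measurable_snd.aemeasurable (hγ.map_snd.symm ▸ msupport_mem_ae ν)
  refine integral_mono_ae (i1.sub i2)
    (integrable_continuousMap γ ⟨fun p => dist p.1 p.2, continuous_dist⟩) ?_
  filter_upwards [a1, a2] with p h1 h2
  exact hadm _ h1 _ h2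

/-- The 1-Wasserstein distance equals the supremum of `∫ φ d(μ - ν)` over all
bounded continuous `φ` satisfying the admissibility condition
`φ(x) - φ(y) ≤ |x - y|` for all `x ∈ supp μ`, `y ∈ supp ν`. -/
theorem wasserstein_eq_sup_admissible {d : ℕ} (Ω : Set (EuclideanSpace ℝ (Fin d)))
    (hΩ : IsCompact Ω) (μ ν : Measure Ω)
    [IsProbabilityMeasure μ] [IsProbabilityMeasure ν] :
    W1 μ ν = sSup {r | ∃ φ : Ω → ℝ, Continuous φ ∧
      Bornology.IsBounded (Set.range φ) ∧
      (∀ x ∈ msupport μ, ∀ y ∈ msupport ν, φ x - φ y ≤ dist x y) ∧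
      r = ∫ x, φ x ∂μ - ∫ y, φ y ∂ν} := by
  have : CompactSpace Ω := isCompact_iff_compactSpace.1 hΩ
  obtain ⟨γ, hγ, hc, hdual⟩ := exists_isCoupling_forall_exists_lipschitz μ ν
  have hweak : ∀ γ : Measure (Ω × Ω), IsProbabilityMeasure γ → IsCoupling γ μ ν →
      ∀ r ∈ {r | ∃ φ : Ω → ℝ, Continuous φ ∧ Bornology.IsBounded (Set.range φ) ∧
        (∀ x ∈ msupport μ, ∀ y ∈ msupport ν, φ x - φ y ≤ dist x y) ∧
        r = ∫ x, φ x ∂μ - ∫ y, φ y ∂ν}, r ≤ ∫ p, dist p.1 p.2 ∂γ := by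
    rintro γ hγ hc _ ⟨φ, hφ, -, hadm, rfl⟩
    exact hc.integral_sub_integral_le hφ hadm
  apply le_antisymm
  · refine le_of_forall_pos_le_add fun ε hε => ?_
    obtain ⟨φ, hφ, hle⟩ := hdual ε hε
    have h1 : W1 μ ν ≤ ∫ p, dist p.1 p.2 ∂γ := by
      refine csInf_le ⟨0, ?_⟩ ⟨γ, hγ, hc, rfl⟩
      rintro _ ⟨_, _, _, rfl⟩
      exact integral_nonneg fun _ => dist_nonneg
    refine (h1.trans hle).trans (add_le_add_left (le_csSup ⟨_, hweak γ hγ hc⟩ ?_) ε)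
    refine ⟨φ, hφ.continuous, (isCompact_range hφ.continuous).isBounded, fun x _ y _ => ?_, rfl⟩
    have := (le_abs_self _).trans (hφ.dist_le_mul x y)
    simpa using this
  · refine csSup_le ⟨0, 0, continuous_const, ?_, ?_, ?_⟩ fun r hr => ?_
    · exact (isCompact_range continuous_const).isBounded
    · simp
    · simp
    · refine le_csInf ⟨_, γ, hγ, hc, rfl⟩ ?_
      rintro _ ⟨γ', hγ', hc', rfl⟩
      exact hweak γ' hγ' hc' r hr
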